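/- arXiv:math/0402370 — 2 statements merged into one kernel-verified Lean document; each statement's English description precedes it below -/
import Mathlib

section
/- Let A be a Cohen-Macaulay Noetherian local ring and R a finite A-module with a minimal free resolution 0 → F₂ →ψ F₁ →φ F₀ →p R → 0 of length 2. Let φ' be the matrix φ with its first row erased, and let I' be the zeroth Fitting ideal (ideal of maximal minors) of φ'. Assume depth(Ann_A R, A) = 2 and depth(I', A) ≥ 4. Set A_Y := A/Ann_A R and C := Hom_{A_Y}(R, A_Y) (the conductor of R into A_Y). Then there is an A_Y-module isomorphism R ≅ Hom_{A_Y}(C, C); transporting composition of endomorphisms of C along this isomorphism endows R with a commutative A-algebra structure whose identity element is the image under p of the generator of F₀ corresponding to the first row of φ. -/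
open Matrix IsLocalRing

/-- `depthGE A I M n`: there is an `M`-regular sequence of length `n` consisting of
elements of the ideal `I`. -/
def depthGE (A : Type) [CommRing A] (I : Ideal A) (M : Type) [AddCommGroup M] [Module A M]
    (n : ℕ) : Prop :=
  ∃ rs : List A, rs.length = n ∧ (∀ x ∈ rs, x ∈ I) ∧ RingTheory.Sequence.IsRegular M rs

/-- `depthEq A I M n`: the length of a maximal `M`-regular sequence inside `I` is `n`. -/
def depthEq (A : Type) [CommRing A] (I : Ideal A) (M : Type) [AddCommGroup M] [Module A M]
    (n : ℕ) : Prop :=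
  depthGE A I M n ∧ ¬ depthGE A I M (n + 1)

/-- A Noetherian local ring is Cohen-Macaulay if its depth equals its Krull dimension. -/
def IsCMLocalRing (A : Type) [CommRing A] [IsLocalRing A] : Prop :=
  ∃ rs : List A, (∀ x ∈ rs, x ∈ maximalIdeal A) ∧ RingTheory.Sequence.IsRegular A rs ∧
    (rs.length : WithBot ℕ∞) = ringKrullDim A

/-- `0 → A^{ι₂} →ψ A^{ι₁} →φ A^{ι₀} →p R → 0` is exact. -/
def IsFreeRes₂ (A : Type) [CommRing A] {R : Type} [AddCommGroup R] [Module A R]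
    {ι₀ ι₁ ι₂ : Type} [Fintype ι₀] [Fintype ι₁] [Fintype ι₂]
    (φ : Matrix ι₀ ι₁ A) (ψ : Matrix ι₁ ι₂ A) (p : (ι₀ → A) →ₗ[A] R) : Prop :=
  Function.Surjective p ∧ LinearMap.ker p = LinearMap.range φ.mulVecLin ∧
    LinearMap.ker φ.mulVecLin = LinearMap.range ψ.mulVecLin ∧
    LinearMap.ker ψ.mulVecLin = ⊥

/-- The ideal of maximal minors (zeroth Fitting ideal) of a matrix with `m` rows. -/
def maxMinors (A : Type) [CommRing A] {m : ℕ} {J : Type} [Fintype J] [DecidableEq J]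
    (M : Matrix (Fin m) J A) : Ideal A :=
  Ideal.span {x | ∃ c : Fin m → J, Function.Injective c ∧ x = (M.submatrix id c).det}

namespace HeartAux

open CategoryTheory Abelian

/-- Vanishing of `Ext^i(Q, M)` for `i < n` and all `Q` killed by `I`. -/
def ExtVanish {A : Type} [CommRing A] (I : Ideal A) (M : Type) [AddCommGroup M] [Module A M]
    (n : ℕ) : Prop :=
  ∀ Q : ModuleCat.{0} A, (∀ a ∈ I, ∀ q : Q, a • q = 0) → ∀ i < n,
    Subsingleton (Ext.{0} Q (ModuleCat.of A M) i)

lemma extVanish_of_regular {A : Type} [CommRing A] (I : Ideal A) (rs : List A)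
    (hI : ∀ x ∈ rs, x ∈ I) (M : Type) [AddCommGroup M] [Module A M]
    (h : RingTheory.Sequence.IsWeaklyRegular M rs) : ExtVanish I M rs.length := by
  induction rs generalizing M with
  | nil => intro Q _ i hi; simp at hi
  | cons a rs ih =>
    intro Q hQ i hi
    rw [RingTheory.Sequence.isWeaklyRegular_cons_iff] at h
    have ha : a ∈ I := hI a (by simp)
    have hk : a ∈ Module.annihilator A Q := Module.mem_annihilator.mpr (hQ a ha)
    have ih' := ih (fun x hx => hI x (by simp [hx])) _ h.2 Q hQ
    have key : ∀ x : Ext.{0} Q (ModuleCat.of A M) i, a • x = 0 → x = 0 := by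
      intro x hx
      match i with
      | 0 =>
        obtain ⟨f, rfl⟩ := Ext.mk₀_bijective _ _ |>.2 x
        have : f = 0 := by
          ext q
          apply h.1
          have := hQ a ha q
          change a • f.hom q = a • (0 : M)
          rw [← map_smul, this]; simp
        simp [this]
      | i + 1 =>
        have := Ext.covariant_sequence_exact₁ Q
          (IsSMulRegular.smulShortComplex_shortExact (M := ModuleCat.of A M) h.1) (n₀ := i) x
          (by
            have : (ModuleCat.smulShortComplex (ModuleCat.of A M) a).f = a • 𝟙 _ := rfl
            rw [Ext.smul_eq_comp_mk₀] at hx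
            exact hx) rfl
        obtain ⟨y, hy⟩ := this
        have := ih' i (by simpa using hi)
        have hy0 : y = 0 := this.elim _ _
        rw [← hy, hy0, Ext.zero_comp]
        rfl
    have z : ∀ x : Ext.{0} Q (ModuleCat.of A M) i, x = 0 := by
      intro x
      apply key
      have := Ext.postcomp_smul_id_eq_zero_of_mem_annihilator (M := ModuleCat.of A M) hk i
      have := congrArg (fun f => f.hom x) this
      rw [Ext.smul_eq_comp_mk₀]
      exact this
    exact ⟨fun x y => by rw [z x, z y]⟩

lemma isWeaklyRegular_pi {A : Type} [CommRing A] (rs : List A) (n : ℕ)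
    (h : RingTheory.Sequence.IsWeaklyRegular A rs) :
    RingTheory.Sequence.IsWeaklyRegular (Fin n → A) rs := by
  have := h.of_flat (S := Fin n → A)
  rwa [RingTheory.Sequence.isWeaklyRegular_map_algebraMap_iff] at this

lemma ExtVanish.shift {A : Type} [CommRing A] (I : Ideal A) {X Y Z : Type}
    [AddCommGroup X] [Module A X] [AddCommGroup Y] [Module A Y] [AddCommGroup Z] [Module A Z]
    (f : X →ₗ[A] Y) (g : Y →ₗ[A] Z) (hf : Function.Injective f) (hg : Function.Surjective g)
    (hfg : Function.Exact f g) {n : ℕ} (hX : ExtVanish I X (n + 1)) (hY : ExtVanish I Y n) :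
    ExtVanish I Z n := by
  intro Q hQ i hi
  have hS := ModuleCat.shortComplex_shortExact
    (ModuleCat.shortComplexOfCompEqZero f g hfg.linearMap_comp_eq_zero) hfg hf hg
  have z : ∀ x : Ext.{0} Q (ModuleCat.of A Z) i, x = 0 := by
    intro x
    obtain ⟨y, hy⟩ := Ext.covariant_sequence_exact₃ Q hS x rfl
      ((hX Q hQ (i + 1) (by omega)).elim _ _)
    have hy0 : y = 0 := (hY Q hQ i hi).elim _ _
    rw [← hy, hy0, Ext.zero_comp]
  exact ⟨fun x y => by rw [z x, z y]⟩

lemma ExtVanish.torsionFree {A : Type} [CommRing A] {I : Ideal A} {M : Type}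
    [AddCommGroup M] [Module A M] (h : ExtVanish I M 2) (m : M) (hm : ∀ a ∈ I, a • m = 0) :
    m = 0 := by
  have := h (ModuleCat.of A (Submodule.span A {m})) (by
    rintro a ha ⟨q, hq⟩
    obtain ⟨c, rfl⟩ := Submodule.mem_span_singleton.mp hq
    ext
    change a • c • m = 0
    rw [smul_comm, hm a ha, smul_zero]) 0 (by norm_num)
  have h0 : ModuleCat.ofHom (Submodule.subtype (Submodule.span A {m})) = 0 :=
    (Ext.mk₀_bijective _ _).1 (this.elim _ _)
  have h1 := congrArg (fun f => f.hom ⟨m, Submodule.mem_span_singleton_self m⟩) h0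
  exact h1

lemma ExtVanish.extend {A : Type} [CommRing A] {I : Ideal A} {M : Type}
    [AddCommGroup M] [Module A M] (h : ExtVanish I M 2) {N L : Type}
    [AddCommGroup N] [Module A N] [AddCommGroup L] [Module A L] (j : N →ₗ[A] L)
    (hj : Function.Injective j) (hI : ∀ a ∈ I, ∀ l : L, ∃ n, j n = a • l) (f : N →ₗ[A] M) :
    ∃ g : L →ₗ[A] M, ∀ n, g (j n) = f n := by
  have hfg : Function.Exact j (LinearMap.range j).mkQ := j.exact_map_mkQ_range
  have hS := ModuleCat.shortComplex_shortExact
    (ModuleCat.shortComplexOfCompEqZero j (LinearMap.range j).mkQ hfg.linearMap_comp_eq_zero)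
    hfg hj (Submodule.mkQ_surjective _)
  have := h (ModuleCat.of A (L ⧸ LinearMap.range j)) (by
    intro a ha q
    obtain ⟨q, rfl⟩ := Submodule.mkQ_surjective _ q
    rw [← map_smul]
    exact (Submodule.Quotient.mk_eq_zero _).mpr (hI a ha q)) 1 (by norm_num)
  obtain ⟨x, hx⟩ := Ext.contravariant_sequence_exact₁ hS (ModuleCat.of A M)
    (Ext.mk₀ (ModuleCat.ofHom f)) (n₁ := 1) rfl (this.elim _ _)
  obtain ⟨g, rfl⟩ := (Ext.mk₀_bijective _ _).2 x
  rw [Ext.mk₀_comp_mk₀] at hx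
  have hx := (Ext.mk₀_bijective _ _).1 hx
  refine ⟨g.hom, fun n => ?_⟩
  exact congrArg (fun f => f.hom n) hx

/-- The algebraic core. -/
lemma core {A : Type} [CommRing A] (I : Ideal A) (R : Type) [AddCommGroup R] [Module A R]
    (hR : ExtVanish I R 2) (e : R) (he : ∀ a ∈ I, ∀ r : R, ∃ c : A, c • e = a • r) :
    ∃ Φ : R ≃ₗ[A]
        ((R →ₗ[A] (A ⧸ Module.annihilator A R)) →ₗ[A]
          (R →ₗ[A] (A ⧸ Module.annihilator A R))),
      (∀ x y : R, (Φ x).comp (Φ y) = (Φ y).comp (Φ x)) ∧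
      Φ e = LinearMap.id := by
  have tf := hR.torsionFree
  have hann : ∀ c : A, c • e = 0 → c ∈ Module.annihilator A R := by
    intro c hc
    rw [Module.mem_annihilator]
    intro r
    apply tf
    intro a ha
    obtain ⟨d, hd⟩ := he a ha r
    rw [smul_comm, ← hd, smul_comm, hc, smul_zero]
  -- the inclusion `A_Y → R`
  let ι : (A ⧸ Module.annihilator A R) →ₗ[A] R :=
    Submodule.liftQ _ (LinearMap.toSpanSingleton A R e) (by
      intro c hc
      exact Module.mem_annihilator.mp hc e)
  have ι_mk : ∀ c : A, ι (Submodule.Quotient.mk c) = c • e := fun c => rfl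
  have ι_inj : Function.Injective ι := by
    rw [← LinearMap.ker_eq_bot, LinearMap.ker_eq_bot']
    intro x
    obtain ⟨c, rfl⟩ := Submodule.Quotient.mk_surjective _ x
    intro h
    exact (Submodule.Quotient.mk_eq_zero _).mpr (hann c h)
  have hι : ∀ a ∈ I, ∀ r : R, ∃ x, ι x = a • r := by
    intro a ha r
    obtain ⟨c, hc⟩ := he a ha r
    exact ⟨Submodule.Quotient.mk c, hc⟩
  -- endomorphisms of `R` are determined by their value at `e`
  have ev_inj : ∀ g h : R →ₗ[A] R, g e = h e → g = h := by
    intro g h hgh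
    ext r
    rw [← sub_eq_zero]
    apply tf
    intro a ha
    obtain ⟨c, hc⟩ := he a ha r
    rw [smul_sub, ← map_smul, ← map_smul, ← hc, map_smul, map_smul, hgh, sub_self]
  let ev : (R →ₗ[A] R) →ₗ[A] R := LinearMap.applyₗ e
  have ev_surj : Function.Surjective ev := by
    intro r
    obtain ⟨g, hg⟩ := hR.extend ι ι_inj hι (Submodule.liftQ _ (LinearMap.toSpanSingleton A R r) (by
      intro c hc
      exact Module.mem_annihilator.mp hc r))
    refine ⟨g, ?_⟩
    have h1 := hg (Submodule.Quotient.mk 1)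
    rw [ι_mk, one_smul] at h1
    refine h1.trans ?_
    change (1 : A) • r = r
    simp
  let L : R ≃ₗ[A] (R →ₗ[A] R) :=
    (LinearEquiv.ofBijective ev ⟨fun g h => ev_inj g h, ev_surj⟩).symm
  have L_e : ∀ r, L r e = r := fun r =>
    (LinearEquiv.ofBijective ev ⟨fun g h => ev_inj g h, ev_surj⟩).apply_symm_apply r
  have comm : ∀ (g h : R →ₗ[A] R) (x : R), g (h x) = h (g x) := by
    intro g h x
    have : g.comp h = h.comp g := by
      apply ev_inj
      change g (h e) = h (g e)
      rw [← sub_eq_zero]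
      apply tf
      intro a ha
      apply tf
      intro b hb
      obtain ⟨c, hc⟩ := he a ha (h e)
      obtain ⟨d, hd⟩ := he b hb (g e)
      have h1 : b • a • g (h e) = (c * d) • e := by
        rw [← map_smul, ← hc, map_smul, smul_comm, ← hd, smul_smul]
      have h2 : b • a • h (g e) = (c * d) • e := by
        rw [smul_comm, ← map_smul, ← hd, map_smul, smul_comm, ← hc, smul_smul, mul_comm]
      rw [smul_sub, smul_sub, h1, h2, sub_self]
    exact LinearMap.congr_fun this x
  -- the action of `R` on `C`
  let Φ : R →ₗ[A] ((R →ₗ[A] (A ⧸ Module.annihilator A R)) →ₗ[A]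
          (R →ₗ[A] (A ⧸ Module.annihilator A R))) :=
    { toFun := fun r => 
        { toFun := fun f => f.comp (L r)
          map_add' := fun f g => LinearMap.add_comp _ _ _
          map_smul' := fun c f => LinearMap.smul_comp _ _ _ }
      map_add' := fun r s => by ext f x; simp
      map_smul' := fun c r => by ext f x; simp }
  have Φ_apply : ∀ r f x, Φ r f x = f (L r x) := fun _ _ _ => rfl
  -- `κ : C → R`
  let κ : (R →ₗ[A] (A ⧸ Module.annihilator A R)) →ₗ[A] R := ι.comp (LinearMap.applyₗ e)
  have κ_apply : ∀ f, κ f = ι (f e) := fun _ => rfl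
  have κ_inj : Function.Injective κ := by
    intro f g hfg
    have := ev_inj (ι.comp f) (ι.comp g) hfg
    ext x
    exact ι_inj (LinearMap.congr_fun this x)
  have hfa : ∀ a ∈ I, ∃ f : R →ₗ[A] (A ⧸ Module.annihilator A R), ∀ x, ι (f x) = a • x := by
    intro a ha
    let E := LinearEquiv.ofInjective ι ι_inj
    refine ⟨E.symm.toLinearMap.comp ((LinearMap.lsmul A R a).codRestrict (LinearMap.range ι)
      (fun r => hι a ha r)), fun x => ?_⟩
    have := LinearEquiv.ofInjective_apply ι (h := ι_inj) (E.symm ⟨a • x, hι a ha x⟩)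
    refine this.symm.trans ?_
    change ((E (E.symm ⟨a • x, hι a ha x⟩) : LinearMap.range ι) : R) = _
    rw [LinearEquiv.apply_symm_apply]
  have hκ : ∀ a ∈ I, ∀ r : R, ∃ f, κ f = a • r := by
    intro a ha r
    obtain ⟨f, hf⟩ := hfa a ha
    refine ⟨f.comp (L r), ?_⟩
    rw [κ_apply, LinearMap.comp_apply, hf, L_e]
  have Φ_inj : Function.Injective Φ := by
    intro r s hrs
    rw [← sub_eq_zero]
    apply tf
    intro a ha
    obtain ⟨f, hf⟩ := hfa a ha
    have h1 : Φ r f e = Φ s f e := by rw [hrs]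
    rw [Φ_apply, Φ_apply, L_e, L_e] at h1
    rw [← hf, map_sub, h1, sub_self, map_zero]
  have Φ_surj : Function.Surjective Φ := by
    intro T
    obtain ⟨h, hh⟩ := hR.extend κ κ_inj hκ (κ.comp T)
    refine ⟨h e, ?_⟩
    ext1 f
    apply κ_inj
    rw [κ_apply, Φ_apply, L_e]
    have := comm (ι.comp f) h e
    refine this.trans ?_
    exact hh f
  refine ⟨LinearEquiv.ofBijective Φ ⟨Φ_inj, Φ_surj⟩, ?_, ?_⟩
  · intro x y
    ext1 f
    ext1 r
    change f (L y (L x r)) = f (L x (L y r))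
    rw [comm]
  · ext1 f
    ext1 r
    change f (L e r) = f r
    have : L e = LinearMap.id := ev_inj _ _ (L_e e)
    rw [this]; rfl

lemma minors_kill {A : Type} [CommRing A] {R : Type} [AddCommGroup R] [Module A R] {n₀ n₁ : ℕ}
    (φ : Matrix (Fin (n₀ + 1)) (Fin n₁) A) (p : (Fin (n₀ + 1) → A) →ₗ[A] R)
    (hp : Function.Surjective p) (hφ : LinearMap.ker p = LinearMap.range φ.mulVecLin) :
    ∀ a ∈ maxMinors A (φ.submatrix Fin.succ id), ∀ r : R,
      ∃ c : A, c • p (Pi.single 0 1) = a • r := by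
  have hz : ∀ v, p (φ *ᵥ v) = 0 := by
    intro v
    have : φ.mulVecLin v ∈ LinearMap.ker p := by rw [hφ]; exact ⟨v, rfl⟩
    exact this
  intro a ha
  suffices h : maxMinors A (φ.submatrix Fin.succ id) ≤
      (Submodule.span A {p (Pi.single 0 1)}).colon Set.univ by
    intro r
    exact Submodule.mem_span_singleton.mp (Submodule.mem_colon.mp (h ha) r trivial)
  unfold maxMinors
  rw [Ideal.span_le]
  rintro _ ⟨c, -, rfl⟩
  refine Submodule.mem_colon.mpr ?_
  rintro r -
  obtain ⟨w, rfl⟩ := hp r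
  set M := ((φ.submatrix Fin.succ id).submatrix id c) with hM
  -- take `v` with `φ' v = det • (tail of w)`
  let u : Fin n₀ → A := M.adjugate *ᵥ (fun i => w i.succ)
  let v : Fin n₁ → A := ∑ j, u j • Pi.single (c j) 1
  have hv : ∀ i : Fin n₀, (φ *ᵥ v) i.succ = M.det * w i.succ := by
    intro i
    have h1 : (φ *ᵥ v) i.succ = (M *ᵥ u) i := by
      simp only [v, Matrix.mulVec_sum, Matrix.mulVec_smul, Matrix.mulVec_single_one]
      simp [Matrix.mulVec, dotProduct, hM, mul_comm]
    rw [h1]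
    simp only [u, Matrix.mulVec_mulVec, Matrix.mul_adjugate, Matrix.smul_mulVec, Matrix.one_mulVec]
    simp
  rw [Submodule.mem_span_singleton]
  refine ⟨M.det * w 0 - (φ *ᵥ v) 0, ?_⟩
  rw [← map_smul, ← map_smul, ← sub_eq_zero, ← map_sub]
  have : (M.det * w 0 - (φ *ᵥ v) 0) • (Pi.single 0 1 : Fin (n₀ + 1) → A) - M.det • w
      = - (φ *ᵥ v) := by
    ext i
    refine Fin.cases ?_ (fun i => ?_) i
    · simp
    · simp [hv]
  rw [this, map_neg, hz, neg_zero]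

end HeartAux

/-- **Theorem 1.1.**  Let `A` be a Cohen-Macaulay Noetherian local ring and `R` a finite
`A`-module with a minimal free resolution `0 → F₂ →ψ F₁ →φ F₀ →p R → 0`.  Let `φ'` be `φ`
with its first row erased and `I'` its ideal of maximal minors.  If `depth(Ann_A R, A) = 2`
and `depth(I', A) ≥ 4`, then, with `A_Y := A ⧸ Ann_A R` and `C := Hom_{A_Y}(R, A_Y)`
(`A`-linear and `A_Y`-linear maps coincide since everything is killed by `Ann_A R`),
there is an (`A_Y`-linear) isomorphism `R ≃ Hom_{A_Y}(C, C)` under which composition of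
endomorphisms of `C` is a commutative multiplication on `R` whose identity element is the
image under `p` of the generator of `F₀` corresponding to the first row of `φ`. -/
theorem ring_structure_from_heartsuit
    (A : Type) [CommRing A] [IsLocalRing A] [IsNoetherianRing A] (hCM : IsCMLocalRing A)
    (R : Type) [AddCommGroup R] [Module A R] [Module.Finite A R]
    (n₀ n₁ n₂ : ℕ)
    (φ : Matrix (Fin (n₀ + 1)) (Fin n₁) A) (ψ : Matrix (Fin n₁) (Fin n₂) A)
    (p : (Fin (n₀ + 1) → A) →ₗ[A] R)
    (hres : IsFreeRes₂ A φ ψ p)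
    (hmin : (∀ i j, φ i j ∈ maximalIdeal A) ∧ ∀ i j, ψ i j ∈ maximalIdeal A)
    (hdepthAnn : depthEq A (Module.annihilator A R) A 2)
    (hheart : depthGE A (maxMinors A (φ.submatrix Fin.succ id)) A 4) :
    ∃ e : R ≃ₗ[A]
        ((R →ₗ[A] (A ⧸ Module.annihilator A R)) →ₗ[A]
          (R →ₗ[A] (A ⧸ Module.annihilator A R))),
      (∀ x y : R, (e x).comp (e y) = (e y).comp (e x)) ∧
      e (p (Pi.single 0 1)) = LinearMap.id := by
  obtain ⟨hp, hφ, hψ, hψ0⟩ := hres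
  obtain ⟨rs, hlen, hmem, hreg⟩ := hheart
  have hF : ∀ n, HeartAux.ExtVanish (maxMinors A (φ.submatrix Fin.succ id)) (Fin n → A) 4 := by
    intro n
    rw [← hlen]
    exact HeartAux.extVanish_of_regular _ rs hmem _
      (HeartAux.isWeaklyRegular_pi rs n hreg.toIsWeaklyRegular)
  have mono : ∀ (M : Type) [AddCommGroup M] [Module A M] (m n : ℕ), m ≤ n →
      HeartAux.ExtVanish (maxMinors A (φ.submatrix Fin.succ id)) M n →
      HeartAux.ExtVanish (maxMinors A (φ.submatrix Fin.succ id)) M m :=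
    fun M _ _ m n hmn h Q hQ i hi => h Q hQ i (lt_of_lt_of_le hi hmn)
  have hK : HeartAux.ExtVanish (maxMinors A (φ.submatrix Fin.succ id))
      (LinearMap.ker p) 3 := by
    refine HeartAux.ExtVanish.shift _ ψ.mulVecLin
      (φ.mulVecLin.codRestrict (LinearMap.ker p) (fun v => by rw [hφ]; exact ⟨v, rfl⟩))
      (LinearMap.ker_eq_bot.mp hψ0) ?_ ?_ (hF _) (mono _ 3 4 (by norm_num) (hF _))
    · rintro ⟨x, hx⟩
      have hx' := hx
      rw [hφ] at hx'
      obtain ⟨v, hv⟩ := hx'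
      exact ⟨v, Subtype.ext hv⟩
    · rw [LinearMap.exact_iff, LinearMap.ker_codRestrict]
      exact hψ
  have hR : HeartAux.ExtVanish (maxMinors A (φ.submatrix Fin.succ id)) R 2 := by
    refine HeartAux.ExtVanish.shift _ (LinearMap.ker p).subtype p
      (Submodule.subtype_injective _) hp ?_ hK (mono _ 2 4 (by norm_num) (hF _))
    rw [LinearMap.exact_iff, Submodule.range_subtype]
  exact HeartAux.core _ R hR _ (HeartAux.minors_kill φ p hp hφ)
end

section
/- Let S = S₀ ⊕ S₁ ⊕ … be a positively graded Cohen-Macaulay ring with S₀ a field and S a finitely generated S₀-algebra, and let R be a finite graded S-module with a minimal graded free resolution 0 → ⊕_l S(−s_l) →ψ ⊕_k S(−r_k) →φ ⊕_j S(−q_j) →p R → 0. Let φ' be the matrix φ with its first row erased and I' its zeroth Fitting ideal. Assume depth(Ann_S R, S) = 2 and depth(I', S) ≥ 4. Set S_Y := S/Ann_S R and C := Hom_{S_Y}(R, S_Y). Then R ≅ Hom_{S_Y}(C, C) as S_Y-modules, and R acquires an S-algebra structure by defining multiplication as composition of endomorphisms of C. -/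
open Matrix

/-- The irrelevant ideal of a positively graded ring: the ideal generated by all
homogeneous elements of positive degree. -/
def grIrrel (K S : Type) [Field K] [CommRing S] [Algebra K S]
    (𝒜 : ℕ → Submodule K S) : Ideal S :=
  Ideal.span {x : S | ∃ i : ℕ, 0 < i ∧ x ∈ 𝒜 i}

/-- `x` is homogeneous of degree `d ∈ ℤ` (for `d < 0` this means `x = 0`). -/
def homogOfDeg (K S : Type) [Field K] [CommRing S] [Algebra K S]
    (𝒜 : ℕ → Submodule K S) (d : ℤ) (x : S) : Prop :=
  if 0 ≤ d then x ∈ 𝒜 d.toNat else x = 0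

/-- A positively graded ring, finitely generated over the field `S₀`, is Cohen-Macaulay
iff the depth of the irrelevant maximal ideal equals the Krull dimension. -/
def IsCMGraded (K S : Type) [Field K] [CommRing S] [Algebra K S]
    (𝒜 : ℕ → Submodule K S) : Prop :=
  ∃ rs : List S, (∀ x ∈ rs, x ∈ grIrrel K S 𝒜) ∧ RingTheory.Sequence.IsRegular S rs ∧
    (rs.length : WithBot ℕ∞) = ringKrullDim S

section Aux
open CategoryTheory Abelian

theorem aux_se {S : Type} [CommRing S] {A B C : Type} [AddCommGroup A] [AddCommGroup B] [AddCommGroup C]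
    [Module S A] [Module S B] [Module S C] (f : A →ₗ[S] B) (g : B →ₗ[S] C)
    (hf : Function.Injective f) (hg : Function.Surjective g) (h : Function.Exact f g) :
    (ShortComplex.mk (ModuleCat.ofHom f) (ModuleCat.ofHom g)
      (by ext x; exact h.apply_apply_eq_zero x)).ShortExact where
  exact := by
    rw [ShortComplex.moduleCat_exact_iff]
    intro x hx
    exact (h x).1 hx
  mono_f := by simpa [ModuleCat.mono_iff_injective] using hf
  epi_g := by simpa [ModuleCat.epi_iff_surjective] using hg

/-- vanishing of `Ext^i(N,M)` for `i < k`. -/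
def ExtVan (S : Type) [CommRing S] (N M : Type) [AddCommGroup N] [AddCommGroup M] [Module S N] [Module S M]
    (k : ℕ) : Prop := ∀ i < k, ∀ x : Ext (ModuleCat.of S N) (ModuleCat.of S M) i, x = 0

section
variable {S : Type} [CommRing S] {N A B C : Type} [AddCommGroup N] [Module S N]
    [AddCommGroup A] [AddCommGroup B] [AddCommGroup C]
    [Module S A] [Module S B] [Module S C]

theorem extVan_mid {k : ℕ} (f : A →ₗ[S] B) (g : B →ₗ[S] C)
    (hf : Function.Injective f) (hg : Function.Surjective g) (h : Function.Exact f g)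
    (hA : ExtVan S N A k) (hC : ExtVan S N C k) : ExtVan S N B k := by
  intro i hi x
  obtain ⟨y, hy⟩ := Ext.covariant_sequence_exact₂ (ModuleCat.of S N) (aux_se f g hf hg h) x (hC i hi _)
  rw [← hy, hA i hi y, Ext.zero_comp]

theorem extVan_right {k : ℕ} (f : A →ₗ[S] B) (g : B →ₗ[S] C)
    (hf : Function.Injective f) (hg : Function.Surjective g) (h : Function.Exact f g)
    (hA : ExtVan S N A (k+1)) (hB : ExtVan S N B k) : ExtVan S N C k := by
  intro i hi x
  obtain ⟨y, hy⟩ := Ext.covariant_sequence_exact₃ (ModuleCat.of S N) (aux_se f g hf hg h) x rfl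
    (hA (i+1) (by omega) _)
  rw [← hy, hB i hi y, Ext.zero_comp]
end

theorem extVan_pi {S : Type} [CommRing S] {N : Type} [AddCommGroup N] [Module S N] {k : ℕ}
    (h : ExtVan S N S k) (n : ℕ) : ExtVan S N (Fin n → S) k := by
  induction n with
  | zero =>
    intro i hi x
    rw [← Ext.comp_mk₀_id x]
    have : 𝟙 (ModuleCat.of S (Fin 0 → S)) = 0 := by
      apply ModuleCat.hom_ext; apply LinearMap.ext; intro x
      exact Subsingleton.elim (α := Fin 0 → S) _ _
    rw [this, Ext.mk₀_zero, Ext.comp_zero]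
  | succ n ih =>
    refine extVan_mid (LinearMap.single S (fun _ : Fin (n+1) => S) 0) (LinearMap.funLeft S S Fin.succ)
      ?_ ?_ ?_ h ih
    · intro a b hab
      simpa using congrFun hab 0
    · exact LinearMap.funLeft_surjective_of_injective _ _ _ (Fin.succ_injective _)
    · intro x
      constructor
      · intro hx
        refine ⟨x 0, ?_⟩
        funext j
        refine Fin.cases (by simp) (fun j => ?_) j
        have := congrFun hx j
        simpa [LinearMap.funLeft] using this.symm
      · rintro ⟨y, rfl⟩
        funext j
        simp [LinearMap.funLeft]

theorem depth_key {S R : Type} [CommRing S] [IsNoetherianRing S] [AddCommGroup R] [Module S R]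
    {n₀ n₁ n₂ : ℕ} (p : (Fin n₀ → S) →ₗ[S] R) (f : (Fin n₁ → S) →ₗ[S] (Fin n₀ → S))
    (g : (Fin n₂ → S) →ₗ[S] (Fin n₁ → S)) (hp : Function.Surjective p)
    (h0 : LinearMap.ker p = LinearMap.range f) (h1 : LinearMap.ker f = LinearMap.range g)
    (h2 : LinearMap.ker g = ⊥) (rs : List S) (hl : rs.length = 4)
    (hr : RingTheory.Sequence.IsRegular S rs) :
    ExtVan S (S ⧸ Ideal.ofList rs) R 2 := by
  have hS : ExtVan S (S ⧸ Ideal.ofList rs) S 4 := by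
    intro i hi x
    have := ModuleCat.subsingleton_ext_of_exists_isRegular (Ideal.ofList rs)
      (ModuleCat.of S (S ⧸ Ideal.ofList rs))
      (by change Module.support S (S ⧸ Ideal.ofList rs) ⊆ _
          rw [Module.support_eq_zeroLocus, Ideal.annihilator_quotient]) (ModuleCat.of S S)
      (lt_top_iff_ne_top.2 hr.top_ne_smul.symm) rs
      (fun r hr => Ideal.subset_span hr) hr i (by omega)
    exact Subsingleton.elim _ _
  have hZ : ExtVan S (S ⧸ Ideal.ofList rs) (LinearMap.range f) 3 := by
    refine extVan_right g f.rangeRestrict (LinearMap.ker_eq_bot.1 h2) f.surjective_rangeRestrict ?_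
      (extVan_pi hS _) (fun i hi => extVan_pi hS _ i (by omega))
    rw [LinearMap.exact_iff, LinearMap.ker_rangeRestrict, h1]
  refine extVan_right (LinearMap.range f).subtype p (Submodule.subtype_injective _) hp ?_ hZ
    (fun i hi => extVan_pi hS _ i (by omega))
  rw [LinearMap.exact_iff, Submodule.range_subtype, h0]

theorem tors_of_van {S R : Type} [CommRing S] [AddCommGroup R] [Module S R] (J : Ideal S)
    (h : ExtVan S (S ⧸ J) R 2) (x : R) (hx : ∀ g ∈ J, g • x = 0) : x = 0 := by
  let l : (S ⧸ J) →ₗ[S] R := Submodule.liftQ J (LinearMap.toSpanSingleton S R x) (by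
    intro g hg; simpa using hx g hg)
  have h1 := (Ext.mk₀_eq_zero_iff _).1 (h 0 (by omega) (Ext.mk₀ (ModuleCat.ofHom l)))
  have h2 : l (Submodule.Quotient.mk 1) = 0 := by
    have := congrArg (fun t => t.hom (Submodule.Quotient.mk 1)) h1
    simpa using this
  simpa only [l, Submodule.liftQ_apply, LinearMap.toSpanSingleton_apply, one_smul] using h2

theorem ext_of_van {S R : Type} [CommRing S] [AddCommGroup R] [Module S R] (J : Ideal S)
    (h : ExtVan S (S ⧸ J) R 2) (l : J →ₗ[S] R) : ∃ x : R, ∀ g : J, l g = (g : S) • x := by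
  have se := aux_se J.subtype J.mkQ (Submodule.subtype_injective _) (Submodule.mkQ_surjective _)
    (by rw [LinearMap.exact_iff]; simp)
  obtain ⟨y, hy⟩ := Ext.contravariant_sequence_exact₁ se (ModuleCat.of S R)
    (Ext.mk₀ (ModuleCat.ofHom l)) rfl (h 1 (by omega) _)
  obtain ⟨y, rfl⟩ := (Ext.mk₀_bijective _ _).2 y
  rw [Ext.mk₀_comp_mk₀] at hy
  have hy := (Ext.mk₀_bijective _ _).1 hy
  refine ⟨y.hom (1 : S), fun g => ?_⟩
  have := congrArg (fun t => t.hom g) hy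
  have h3 : l g = y.hom (g : S) := by simpa using this.symm
  rw [h3, ← map_smul]
  simp

theorem main_alg {S R : Type} [CommRing S] [AddCommGroup R] [Module S R] (J A : Ideal S)
    (hA : A = Module.annihilator S R) [Module (S ⧸ A) R]
    (mk_smul : ∀ (s : S) (x : R), (Ideal.Quotient.mk A s) • x = s • x) (e0 : R)
    (hJ : ∀ g ∈ J, ∀ r : R, ∃ s : S, g • r = s • e0)
    (T : ∀ x : R, (∀ g ∈ J, g • x = 0) → x = 0)
    (X : ∀ l : J →ₗ[S] R, ∃ x : R, ∀ g : J, l g = (g : S) • x) :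
    ∃ e : R ≃ₗ[S]
        ((R →ₗ[S] (S ⧸ A)) →ₗ[S]
          (R →ₗ[S] (S ⧸ A))),
      (∀ x y : R, (e x).comp (e y) = (e y).comp (e x)) ∧
      ∃ one : R, e one = LinearMap.id := by
  have smul_q : ∀ (s : S) (q : S ⧸ A), s • q = Ideal.Quotient.mk A s * q := fun s q => by
    rw [Algebra.smul_def]; rfl
  have tow : ∀ (s : S) (q : S ⧸ A) (x : R), (s • q) • x = s • q • x := fun s q x => by
    rw [smul_q, mul_smul, mk_smul]
  have T' : ∀ x y : R, (∀ g : J, (g : S) • x = (g : S) • y) → x = y := fun x y h =>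
    sub_eq_zero.1 (T _ fun g hg => by rw [smul_sub, h ⟨g, hg⟩, sub_self])
  -- injectivity of `q ↦ q • e0`
  have inj0 : ∀ q : S ⧸ A, q • e0 = 0 → q = 0 := by
    intro q hq
    obtain ⟨s, rfl⟩ := Ideal.Quotient.mk_surjective q
    rw [mk_smul] at hq
    rw [Ideal.Quotient.eq_zero_iff_mem, hA, Module.mem_annihilator]
    intro r
    refine T _ fun g hg => ?_
    obtain ⟨t, ht⟩ := hJ g hg r
    rw [smul_comm, ht, smul_comm, hq, smul_zero]
  have inj : ∀ q q' : S ⧸ A, q • e0 = q' • e0 → q = q' := fun q q' h =>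
    sub_eq_zero.1 (inj0 _ (by rw [sub_smul, h, sub_self]))
  have Tq : ∀ q q' : S ⧸ A, (∀ g : J, (g : S) • q = (g : S) • q') → q = q' := fun q q' h =>
    inj _ _ (T' _ _ fun g => by rw [← tow, ← tow, h])
  have lin : ∀ (c : R →ₗ[S] S ⧸ A) (q : S ⧸ A) (r : R), c (q • r) = q * c r := by
    intro c q r
    obtain ⟨s, rfl⟩ := Ideal.Quotient.mk_surjective q
    rw [mk_smul, map_smul, smul_q]
  -- the maps `c g`
  have hc : ∀ g : J, ∃ c : R →ₗ[S] S ⧸ A, ∀ r, c r • e0 = (g : S) • r := by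
    intro g
    choose s hs using hJ g g.2
    refine ⟨{ toFun := fun r => Ideal.Quotient.mk A (s r), map_add' := ?_, map_smul' := ?_ }, ?_⟩
    · intro x y
      apply inj
      rw [add_smul, mk_smul, mk_smul, mk_smul, ← hs, ← hs, ← hs, smul_add]
    · intro a x
      apply inj
      rw [RingHom.id_apply, tow, mk_smul, mk_smul, ← hs, ← hs, smul_comm]
    · intro r
      exact (mk_smul (s r) e0).trans (hs r).symm
  choose c hc using hc
  have cadd : ∀ g h r, c (g + h) r = c g r + c h r := fun g h r => inj _ _ (by
    rw [add_smul, hc, hc, hc, ← add_smul]; rfl)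
  have csmul : ∀ (a : S) g r, c (a • g) r = a • c g r := fun a g r => inj _ _ (by
    rw [tow, hc, hc, smul_smul]; rfl)
  have ce0 : ∀ g : J, c g e0 = Ideal.Quotient.mk A g := fun g => inj _ _ (by
    rw [hc, mk_smul])
  have csw : ∀ (g h : J) r, (h : S) • c g r = (g : S) • c h r := fun g h r => inj _ _ (by
    rw [tow, tow, hc, hc, smul_comm])
  -- the multiplication
  have hμ : ∀ x r : R, ∃ y : R, ∀ g : J, (g : S) • y = c g r • x := by
    intro x r
    obtain ⟨y, hy⟩ := X { toFun := fun g => c g r • x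
                          map_add' := fun g h => by rw [cadd, add_smul]
                          map_smul' := fun a g => by rw [csmul, tow, RingHom.id_apply] }
    exact ⟨y, fun g => (hy g).symm⟩
  choose μ hμ using hμ
  have qs : ∀ (q : S ⧸ A) (s : S) (x : R), q • s • x = s • q • x := fun q s x => by
    rw [← mk_smul, smul_comm, mk_smul]
  let M : R →ₗ[S] R →ₗ[S] R := LinearMap.mk₂ S μ
    (fun x y r => T' _ _ fun g => by rw [smul_add, hμ, hμ, hμ, smul_add])
    (fun a x r => T' _ _ fun g => by rw [smul_comm, hμ, hμ, qs])
    (fun x r t => T' _ _ fun g => by rw [smul_add, hμ, hμ, hμ, map_add, add_smul])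
    (fun a x r => T' _ _ fun g => by rw [smul_comm, hμ, hμ, map_smul, tow])
  have hM : ∀ x r (g : J), (g : S) • M x r = c g r • x := hμ
  have Me0 : ∀ x, M x e0 = x := fun x => T' _ _ fun g => by rw [hM, ce0, mk_smul]
  have e0M : ∀ r, M e0 r = r := fun x => T' _ _ fun g => by rw [hM, hc]
  have sym : ∀ (g : J) x y, c g y • x = c g x • y := fun g x y => T' _ _ fun h => by
    calc (h : S) • c g y • x = c g y • (h : S) • x := (qs _ _ _).symm
      _ = c h x • c g y • e0 := by rw [← hc, smul_comm]
      _ = (g : S) • c h x • y := by rw [hc, qs]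
      _ = (h : S) • c g x • y := by rw [← tow, ← csw, tow]
  have MM : ∀ x y r (g h : J), (g : S) • (h : S) • M x (M y r) = c g r • c h y • x := by
    intro x y r g h
    rw [hM, ← tow, ← map_smul, hM, lin, mul_smul]
  have Mcomm : ∀ x y r, M x (M y r) = M y (M x r) := fun x y r => T' _ _ fun h => T' _ _ fun g => by
    rw [MM, MM, sym h x y]
  let E : R →ₗ[S] ((R →ₗ[S] (S ⧸ A)) →ₗ[S] (R →ₗ[S] (S ⧸ A))) :=
    LinearMap.mk₂ S (fun x d => d.comp (M x))
    (fun x y d => by ext r; simp)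
    (fun a x d => by ext r; simp)
    (fun x d d' => by ext r; simp)
    (fun a x d => by ext r; simp)
  have hE : ∀ x d r, E x d r = d (M x r) := fun x d r => rfl
  have Einj : Function.Injective E := by
    rw [injective_iff_map_eq_zero]
    intro x hx
    refine T _ fun g hg => ?_
    have h1 : E x (c ⟨g, hg⟩) e0 = 0 := by rw [hx]; rfl
    rw [hE, Me0] at h1
    have h2 := hc ⟨g, hg⟩ x
    rw [h1, zero_smul] at h2
    exact h2.symm
  have Esurj : Function.Surjective E := by
    intro f
    obtain ⟨x, hx⟩ := X { toFun := fun g => f (c g) e0 • e0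
                          map_add' := fun g h => by
                            have : c (g + h) = c g + c h := LinearMap.ext fun r => cadd g h r
                            rw [this, map_add, LinearMap.add_apply, add_smul]
                          map_smul' := fun a g => by
                            have : c (a • g) = a • c g := LinearMap.ext fun r => csmul a g r
                            rw [this, map_smul, LinearMap.smul_apply, tow, RingHom.id_apply] }
    have hx : ∀ g : J, f (c g) e0 • e0 = (g : S) • x := hx
    refine ⟨x, LinearMap.ext fun d => ?_⟩
    have key : ∀ (d : R →ₗ[S] S ⧸ A) (h : J) r, (h : S) • d r = c h r * d e0 := fun d h r => by
      rw [← map_smul, ← hc, lin]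
    have h0 : E x d e0 = f d e0 := by
      refine inj _ _ (T' _ _ fun h => ?_)
      obtain ⟨s, hs⟩ := Ideal.Quotient.mk_surjective (d e0)
      have hd : (h : S) • d = s • c h := by
        apply LinearMap.ext
        intro r
        rw [LinearMap.smul_apply, LinearMap.smul_apply, key, ← hs, smul_q, mul_comm]
      have gen : ∀ F : (R →ₗ[S] S ⧸ A) →ₗ[S] (R →ₗ[S] S ⧸ A),
          (h : S) • F d e0 • e0 = s • F (c h) e0 • e0 := fun F => by
        rw [← tow, ← tow, ← LinearMap.smul_apply (h : S) (F d), ← LinearMap.smul_apply s (F (c h)),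
          ← map_smul F, ← map_smul F, hd]
      rw [gen, gen, hx, hE, Me0, hc]
    apply LinearMap.ext
    intro r
    refine Tq _ _ fun h => ?_
    rw [key, key, h0]
  refine ⟨LinearEquiv.ofBijective E ⟨Einj, Esurj⟩, ?_, e0, ?_⟩
  · intro x y
    refine LinearMap.ext fun d => LinearMap.ext fun r => ?_
    change d (M y (M x r)) = d (M x (M y r))
    rw [Mcomm]
  · refine LinearMap.ext fun d => LinearMap.ext fun r => ?_
    change d (M e0 r) = d r
    rw [e0M]

theorem fitting_kill {S R : Type} [CommRing S] [AddCommGroup R] [Module S R] {n₀ n₁ : ℕ}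
    (φ : Matrix (Fin (n₀ + 1)) (Fin n₁) S) (p : (Fin (n₀ + 1) → S) →ₗ[S] R)
    (hp : Function.Surjective p) (h0 : ∀ v, p (φ.mulVec v) = 0)
    (g : S) (hg : g ∈ Ideal.span {x | ∃ c : Fin n₀ → Fin n₁, Function.Injective c ∧
      x = ((φ.submatrix Fin.succ id).submatrix id c).det}) (r : R) :
    ∃ s : S, g • r = s • p (Pi.single 0 1) := by
  induction hg using Submodule.span_induction generalizing r with
  | zero => exact ⟨0, by simp⟩
  | add x y _ _ hx hy =>
    obtain ⟨a, ha⟩ := hx r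
    obtain ⟨b, hb⟩ := hy r
    exact ⟨a + b, by rw [add_smul, add_smul, ha, hb]⟩
  | smul a x _ hx =>
    obtain ⟨b, hb⟩ := hx r
    exact ⟨a * b, by rw [smul_assoc, hb, mul_smul]⟩
  | mem x hx =>
    obtain ⟨c, hc, rfl⟩ := hx
    obtain ⟨v, rfl⟩ := hp r
    set N := (φ.submatrix Fin.succ id).submatrix id c with hN
    -- the preimage
    let w : Fin n₀ → S := N.adjugate.mulVec (fun j => v j.succ)
    have hw : N.mulVec w = fun j => N.det * v j.succ := by
      simp only [w, Matrix.mulVec_mulVec, Matrix.mul_adjugate, Matrix.smul_mulVec, Matrix.one_mulVec]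
      rfl
    let W : Fin n₁ → S := ∑ i, w i • Pi.single (c i) 1
    have hW : ∀ j, φ.mulVec W j = ∑ i, φ j (c i) * w i := by
      intro j
      simp [W, Matrix.mulVec_sum, Matrix.mulVec_smul, mul_comm]
    have hd : N.det • v = φ.mulVec W + (N.det * v 0 - φ.mulVec W 0) • Pi.single 0 1 := by
      funext j
      refine Fin.cases (by simp) (fun j => ?_) j
      have := congrFun hw j
      simp only [Pi.add_apply, Pi.smul_apply, hW, smul_eq_mul]
      rw [← this]
      simp [Matrix.mulVec, dotProduct, hN]
    exact ⟨_, by rw [← map_smul, hd, map_add, h0, zero_add, map_smul]⟩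

end Aux

/-- **Theorem 1.3 (theorem 1.1 bis, graded case).**  Let `S = S₀ ⊕ S₁ ⊕ ⋯` be a graded
Cohen-Macaulay ring, `S₀` a field and `S` a finitely generated `S₀`-algebra, and let `R`
be a finite graded `S`-module with a minimal graded free resolution
`0 → ⊕ S(-s_l) →ψ ⊕ S(-r_k) →φ ⊕ S(-q_j) →p R → 0`.  Let `φ'` be `φ` with its first row
erased and `I'` its ideal of maximal minors.  If `depth(Ann_S R, S) = 2` and
`depth(I', S) ≥ 4` then, with `S_Y := S ⧸ Ann_S R` and `C := Hom_{S_Y}(R, S_Y)`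
(`S`-linear and `S_Y`-linear maps coincide), `R ≅ Hom_{S_Y}(C, C)` as `S_Y`-modules, and
composition of endomorphisms of `C` transports to a commutative unital multiplication on
`R`, making it an `S`-algebra. -/
theorem graded_ring_structure_from_heartsuit
    (K S : Type) [Field K] [CommRing S] [Algebra K S]
    (𝒜 : ℕ → Submodule K S) [GradedAlgebra 𝒜]
    (hfg : Algebra.FiniteType K S)
    (h0 : ∀ x ∈ 𝒜 0, ∃ c : K, x = algebraMap K S c)
    (hCM : IsCMGraded K S 𝒜)
    (R : Type) [AddCommGroup R] [Module S R] [Module K R] [IsScalarTower K S R]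
    [Module.Finite S R]
    (ℳ : ℤ → Submodule K R) [DirectSum.Decomposition ℳ]
    (hcompat : ∀ (i : ℕ) (j : ℤ) (a : S) (x : R), a ∈ 𝒜 i → x ∈ ℳ j →
      a • x ∈ ℳ ((i : ℤ) + j))
    (n₀ n₁ n₂ : ℕ)
    (q : Fin (n₀ + 1) → ℤ) (r : Fin n₁ → ℤ) (s : Fin n₂ → ℤ)
    (φ : Matrix (Fin (n₀ + 1)) (Fin n₁) S) (ψ : Matrix (Fin n₁) (Fin n₂) S)
    (p : (Fin (n₀ + 1) → S) →ₗ[S] R)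
    (hres : IsFreeRes₂ S φ ψ p)
    (hφdeg : ∀ j k, homogOfDeg K S 𝒜 (r k - q j) (φ j k))
    (hψdeg : ∀ k l, homogOfDeg K S 𝒜 (s l - r k) (ψ k l))
    (hpdeg : ∀ j, p (Pi.single j 1) ∈ ℳ (q j))
    (hmin : (∀ j k, φ j k ∈ grIrrel K S 𝒜) ∧ ∀ k l, ψ k l ∈ grIrrel K S 𝒜)
    (hdepthAnn : depthEq S (Module.annihilator S R) S 2)
    (hheart : depthGE S (maxMinors S (φ.submatrix Fin.succ id)) S 4) :
    ∃ e : R ≃ₗ[S]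
        ((R →ₗ[S] (S ⧸ Module.annihilator S R)) →ₗ[S]
          (R →ₗ[S] (S ⧸ Module.annihilator S R))),
      (∀ x y : R, (e x).comp (e y) = (e y).comp (e x)) ∧
      ∃ one : R, e one = LinearMap.id := by
  have hN : IsNoetherianRing S := Algebra.FiniteType.isNoetherianRing K S
  obtain ⟨hp, hk0, hk1, hk2⟩ := hres
  obtain ⟨rs, hl, hmem, hreg⟩ := hheart
  have hv := depth_key p φ.mulVecLin ψ.mulVecLin hp hk0 hk1 hk2 rs hl hreg
  have hle : Ideal.ofList rs ≤ maxMinors S (φ.submatrix Fin.succ id) :=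
    Ideal.span_le.2 fun x hx => hmem x hx
  let _ : Module (S ⧸ Module.annihilator S R) R := Module.quotientAnnihilator
  refine main_alg (Ideal.ofList rs) (Module.annihilator S R) rfl (fun _ _ => rfl)
    (p (Pi.single 0 1)) ?_ (tors_of_van _ hv) (ext_of_van _ hv)
  intro g hg r
  refine fitting_kill φ p hp (fun v => ?_) g (hle hg) r
  have : φ.mulVecLin v ∈ LinearMap.ker p := hk0 ▸ LinearMap.mem_range_self _ v
  exact this
end
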